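/- Let G ⊆ UT(n,ℝ) be a real unipotent group, P a real algebraic subgroup of G, and let N be the algebraic normal closure of P, i.e. a normal real algebraic subgroup of G containing P that is contained in every normal real algebraic subgroup of G containing P. Let Γ be a lattice in G. Then the set of all g ∈ G with the property that every Γ-rational real algebraic subgroup of G containing g⁻¹Pg also contains N is dense in G. (Equivalently: the set {g ∈ G : (g⁻¹Pg)^Γ = N^Γ} is dense in G, where for a real algebraic subgroup K of G, K^Γ denotes the smallest Γ-rational real algebraic subgroup of G containing K.) -/

import Mathlib

open Pointwise Filter

noncomputable section

/-- Square matrices of size `n` over `R`. -/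
abbrev Mat (n : ℕ) (R : Type) : Type := Matrix (Fin n) (Fin n) R

/-- The set `UT(n,ℝ)` of upper triangular matrices with `1`s on the diagonal. -/
def UTset (n : ℕ) : Set (Mat n ℝ) :=
  {A | (∀ i, A i i = 1) ∧ ∀ i j : Fin n, (j : ℕ) < (i : ℕ) → A i j = 0}

/-- The entries of a matrix, as a point of `ℝ^(n²)`. -/
def matEval {n : ℕ} (A : Mat n ℝ) : Fin n × Fin n → ℝ := fun ij => A ij.1 ij.2

/-- A real unipotent group: a subgroup of `UT(n,ℝ)` which is the common zero set in
`UT(n,ℝ)` of a family of real polynomials in the matrix entries. -/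
def IsRealUnipotentGroup (n : ℕ) (G : Set (Mat n ℝ)) : Prop :=
  (∃ S : Set (MvPolynomial (Fin n × Fin n) ℝ),
      G = {A | A ∈ UTset n ∧ ∀ p ∈ S, MvPolynomial.eval (matEval A) p = 0}) ∧
    (1 : Mat n ℝ) ∈ G ∧ (∀ a ∈ G, ∀ b ∈ G, a * b ∈ G) ∧ ∀ a ∈ G, a⁻¹ ∈ G

/-- A real algebraic subgroup of a real unipotent group `G`. -/
def IsRealAlgSubgroup (n : ℕ) (G H : Set (Mat n ℝ)) : Prop :=
  H ⊆ G ∧ IsRealUnipotentGroup n H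

/-- `N` is a normal subgroup-set of `G`. -/
def IsNormalIn (n : ℕ) (G N : Set (Mat n ℝ)) : Prop :=
  ∀ g ∈ G, ∀ x ∈ N, g * x * g⁻¹ ∈ N

/-- `Γ` is a lattice in `G`: a discrete subgroup which is cocompact, i.e. there is a
compact `K ⊆ G` with `K·Γ = G` (equivalently, `G/Γ` is compact). -/
def IsLatticeIn (n : ℕ) (G Γ : Set (Mat n ℝ)) : Prop :=
  Γ ⊆ G ∧ (1 : Mat n ℝ) ∈ Γ ∧ (∀ a ∈ Γ, ∀ b ∈ Γ, a * b ∈ Γ) ∧ (∀ a ∈ Γ, a⁻¹ ∈ Γ) ∧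
    DiscreteTopology ↥Γ ∧
    ∃ K : Set (Mat n ℝ), K ⊆ G ∧ IsCompact K ∧ ∀ g ∈ G, ∃ k ∈ K, ∃ γ ∈ Γ, g = k * γ

/-- `H` is `Γ`-rational: `Γ ∩ H` is a lattice in `H`. -/
def IsRationalFor (n : ℕ) (Γ H : Set (Mat n ℝ)) : Prop :=
  IsLatticeIn n H (Γ ∩ H)

/-- The hyperreal matrix represented by a sequence of real matrices. -/
def matOfSeq (n : ℕ) (u : ℕ → Mat n ℝ) : Mat n Hyperreal :=
  Matrix.of fun i j => Hyperreal.ofSeq fun k => u k i j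

/-- The nonstandard extension `S^♯` of a set `S` of real matrices: hyperreal matrices
represented by sequences landing in `S` on a set of indices in the ultrafilter. -/
def matSharp (n : ℕ) (S : Set (Mat n ℝ)) : Set (Mat n Hyperreal) :=
  {A | ∃ u : ℕ → Mat n ℝ, (∀ᶠ k in hyperfilter ℕ, u k ∈ S) ∧ A = matOfSeq n u}

/-- The canonical embedding of real matrices into hyperreal matrices. -/
def matCast {n : ℕ} (A : Mat n ℝ) : Mat n Hyperreal :=
  Matrix.of fun i j => (A i j : Hyperreal)

/-- `μ(G)`: elements of `G^♯` all of whose entries are infinitesimally close to the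
corresponding entries of the identity matrix. -/
def muSet (n : ℕ) (G : Set (Mat n ℝ)) : Set (Mat n Hyperreal) :=
  {A | A ∈ matSharp n G ∧ ∀ i j, Hyperreal.Infinitesimal (A i j - (1 : Mat n Hyperreal) i j)}

/-- The coset `gH` is near `α`, i.e. `α ∈ μ(G)·g·H^♯`. -/
def NearCoset (n : ℕ) (G : Set (Mat n ℝ)) (g : Mat n ℝ) (H : Set (Mat n ℝ))
    (α : Mat n Hyperreal) : Prop :=
  α ∈ muSet n G * ({matCast g} * matSharp n H)

/-- The set of standard parts of the finite elements of a set of hyperreal matrices. -/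
def matStSet (n : ℕ) (A : Set (Mat n Hyperreal)) : Set (Mat n ℝ) :=
  {B | ∃ a ∈ A, ∀ i j, Hyperreal.IsSt (a i j) (B i j)}

/-- A polynomial map `ℝ^d → Mat n ℝ`. -/
def IsPolyMapVec (d n : ℕ) (F : (Fin d → ℝ) → Mat n ℝ) : Prop :=
  ∃ P : Fin n → Fin n → MvPolynomial (Fin d) ℝ,
    ∀ x i j, F x i j = MvPolynomial.eval x (P i j)

/-- The inclusion `ℝ →+* ℝ*` as a ring homomorphism. -/
def realHyperRingHom : ℝ →+* Hyperreal where
  toFun r := (r : Hyperreal)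
  map_one' := Hyperreal.coe_one
  map_mul' := Hyperreal.coe_mul
  map_zero' := Hyperreal.coe_zero
  map_add' := Hyperreal.coe_add

/-- A semialgebraic subset of matrix space: a finite union of sets defined by finitely
many polynomial equations and finitely many strict polynomial inequalities. -/
def IsSemialgebraic (n : ℕ) (S : Set (Mat n ℝ)) : Prop :=
  ∃ (k : ℕ) (P Q : Fin k → Finset (MvPolynomial (Fin n × Fin n) ℝ)),
    S = ⋃ t : Fin k, {A | (∀ p ∈ P t, MvPolynomial.eval (matEval A) p = 0) ∧
      ∀ q ∈ Q t, 0 < MvPolynomial.eval (matEval A) q}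

/-!
If `Γ` is a lattice in `L`, a polynomial vanishing on `Γ` vanishes on `L`: the operators `p(X) ↦
p(Xγ) - p(X)` are locally nilpotent on polynomials, so by induction `p` may be taken
right-invariant under `Γ`; it is then bounded on `L` by cocompactness, hence constant, since any
two points `a`, `b` of `L` lie on the polynomial curve `t ↦ a(a⁻¹b)ᵗ`. A `Γ`-rational `L` is thus
the Zariski closure of `Γ ∩ L`. There are only countably many such `L`, because the ideal of
polynomials vanishing on `Γ ∩ L` is generated in some degree `≤ d`, where vanishing on `Γ ∩ L`
amounts to vanishing on a finite subset.

If `L` does not contain `N`, the set of `g ∈ G` with `g⁻¹Pg ⊆ L` is a Zariski closed proper subset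
of `G`, for otherwise `P` would lie in the normal core of `L`, which is normal and algebraic. Its
complement is open, and dense because a polynomial curve leaves it only finitely often. The
statement follows from the Baire category theorem.
-/

section VanishingIdeals

open MvPolynomial

variable {σ K : Type*} [Field K] [Finite σ]

theorem exists_finset_subset_forall_mem_vanishingIdeal (V : Set (σ → K)) (d : ℕ) :
    ∃ F : Finset (σ → K), ↑F ⊆ V ∧ ∀ p : MvPolynomial σ K, p.totalDegree ≤ d →
      p ∈ vanishingIdeal K (F : Set (σ → K)) → p ∈ vanishingIdeal K V := by
  classical
  let vanishing (F : Finset (σ → K)) : Submodule K (restrictTotalDegree σ K d) :=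
    ((vanishingIdeal K (F : Set (σ → K))).restrictScalars K).comap (Submodule.subtype _)
  obtain ⟨F, hFV, hmin⟩ := exists_minimalFor_of_wellFoundedLT
    (fun F : Finset (σ → K) => ↑F ⊆ V) vanishing ⟨∅, by simp⟩
  refine ⟨F, hFV, fun p hp hpF x hx => ?_⟩
  have hinsert : vanishing F ≤ vanishing (insert x F) :=
    hmin (by simpa using Set.insert_subset hx hFV)
      (Submodule.comap_mono (vanishingIdeal_anti_mono (by simp)))
  exact @hinsert ⟨p, (mem_restrictTotalDegree σ d p).2 hp⟩ hpF x (by simp)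

theorem exists_vanishingIdeal_eq_span (V : Set (σ → K)) :
    ∃ (d : ℕ) (F : Finset (σ → K)), ↑F ⊆ V ∧ vanishingIdeal K V =
      Ideal.span {p | p.totalDegree ≤ d ∧ p ∈ vanishingIdeal K (F : Set (σ → K))} := by
  obtain ⟨T, hT⟩ := IsNoetherian.noetherian (vanishingIdeal K V)
  obtain ⟨F, hFV, hF⟩ :=
    exists_finset_subset_forall_mem_vanishingIdeal V (T.sup totalDegree)
  refine ⟨T.sup totalDegree, F, hFV, le_antisymm ?_ ?_⟩
  · refine hT.ge.trans (Ideal.span_mono fun p hp => ⟨Finset.le_sup hp, ?_⟩)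
    exact vanishingIdeal_anti_mono hFV (hT ▸ Submodule.subset_span hp)
  · exact Ideal.span_le.2 fun p hp => hF p hp.1 hp.2

theorem countable_image_vanishingIdeal_powerset {V : Set (σ → K)} (hV : V.Countable) :
    (vanishingIdeal K '' 𝒫 V).Countable := by
  let idealOf (d : ℕ) (F : Finset (σ → K)) : Ideal (MvPolynomial σ K) :=
    Ideal.span {p | p.totalDegree ≤ d ∧ p ∈ vanishingIdeal K (F : Set (σ → K))}
  have hfinite : {F : Finset (σ → K) | (F : Set (σ → K)) ⊆ V}.Countable :=
    ((Set.countable_ofPred_finite_subset hV).preimage Finset.coe_injective).mono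
      fun F hF => And.intro F.finite_toSet hF
  refine (Set.countable_iUnion fun d => hfinite.image (idealOf d)).mono ?_
  rintro _ ⟨W, hW, rfl⟩
  obtain ⟨d, F, hFW, h⟩ := exists_vanishingIdeal_eq_span W
  exact Set.mem_iUnion.2 ⟨d, F, hFW.trans hW, h.symm⟩

end VanishingIdeals

section ZariskiClosed

variable {m n : ℕ}

/-- The ideal of polynomials in the matrix entries that vanish on `S`; it encodes the Zariski
closure of `S`. -/
def matIdeal (S : Set (Mat n ℝ)) : Ideal (MvPolynomial (Fin n × Fin n) ℝ) :=
  MvPolynomial.vanishingIdeal ℝ (matEval '' S)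

/-- `S` is the zero set, in the space of all matrices, of a family of polynomials in the matrix
entries; the largest such family is taken. -/
def IsZariskiClosed (S : Set (Mat n ℝ)) : Prop :=
  ∀ A, (∀ p ∈ matIdeal S, MvPolynomial.eval (matEval A) p = 0) → A ∈ S

theorem mem_matIdeal {S : Set (Mat n ℝ)} {p : MvPolynomial (Fin n × Fin n) ℝ} :
    p ∈ matIdeal S ↔ ∀ A ∈ S, MvPolynomial.eval (matEval A) p = 0 :=
  Set.forall_mem_image

theorem matIdeal_anti {S T : Set (Mat n ℝ)} (h : S ⊆ T) : matIdeal T ≤ matIdeal S :=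
  MvPolynomial.vanishingIdeal_anti_mono (Set.image_mono h)

theorem eval_matEval_map {R : Type} [CommRing R] [Algebra ℝ R] (φ : R →ₐ[ℝ] ℝ) (Q : Mat n R)
    (p : MvPolynomial (Fin n × Fin n) ℝ) :
    MvPolynomial.eval (matEval (Q.map φ)) p =
      φ (MvPolynomial.aeval (fun ij => Q ij.1 ij.2) p) := by
  rw [MvPolynomial.comp_aeval_apply, MvPolynomial.aeval_eq_eval]
  rfl

theorem continuous_eval_matEval (p : MvPolynomial (Fin n × Fin n) ℝ) :
    Continuous fun A : Mat n ℝ => MvPolynomial.eval (matEval A) p :=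
  (MvPolynomial.continuous_eval p).comp <| by unfold matEval; fun_prop

namespace IsZariskiClosed

theorem subset_of_matIdeal_le {S T : Set (Mat n ℝ)} (hT : IsZariskiClosed T)
    (h : matIdeal T ≤ matIdeal S) : S ⊆ T :=
  fun A hA => hT A fun _ hp => mem_matIdeal.1 (h hp) A hA

theorem inter {S T : Set (Mat n ℝ)} (hS : IsZariskiClosed S) (hT : IsZariskiClosed T) :
    IsZariskiClosed (S ∩ T) := fun A hA =>
  ⟨hS A fun p hp => hA p (matIdeal_anti Set.inter_subset_left hp),
    hT A fun p hp => hA p (matIdeal_anti Set.inter_subset_right hp)⟩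

theorem iInter {ι : Sort*} {S : ι → Set (Mat n ℝ)} (hS : ∀ i, IsZariskiClosed (S i)) :
    IsZariskiClosed (⋂ i, S i) := fun A hA =>
  Set.mem_iInter.2 fun i => hS i A fun p hp => hA p (matIdeal_anti (Set.iInter_subset S i) hp)

theorem preimage {S : Set (Mat n ℝ)} (hS : IsZariskiClosed S) {f : Mat m ℝ → Mat n ℝ}
    (Q : Mat n (MvPolynomial (Fin m × Fin m) ℝ))
    (hf : ∀ A, f A = Q.map (MvPolynomial.eval (matEval A))) : IsZariskiClosed (f ⁻¹' S) := by
  have heval (A : Mat m ℝ) (p : MvPolynomial (Fin n × Fin n) ℝ) :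
      MvPolynomial.eval (matEval (f A)) p =
        MvPolynomial.eval (matEval A) (MvPolynomial.aeval (fun ij => Q ij.1 ij.2) p) :=
    hf A ▸ eval_matEval_map (MvPolynomial.aeval (matEval A)) Q p
  refine fun A hA => hS (f A) fun p hp => ?_
  rw [heval]
  exact hA _ (mem_matIdeal.2 fun B hB => heval B p ▸ mem_matIdeal.1 hp _ hB)

theorem preimage_mul_mul {S : Set (Mat n ℝ)} (hS : IsZariskiClosed S) (a b : Mat n ℝ) :
    IsZariskiClosed ((fun A => a * A * b) ⁻¹' S) := by
  refine hS.preimage (a.map MvPolynomial.C * Matrix.mvPolynomialX (Fin n) (Fin n) ℝ *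
    b.map MvPolynomial.C) fun A => ?_
  ext i j
  simp [Matrix.mul_apply, matEval]

theorem preimage_adjugate_mul_mul {S : Set (Mat n ℝ)} (hS : IsZariskiClosed S) (x : Mat n ℝ) :
    IsZariskiClosed ((fun A : Mat n ℝ => A.adjugate * x * A) ⁻¹' S) := by
  let X : Mat n (MvPolynomial (Fin n × Fin n) ℝ) := Matrix.mvPolynomialX (Fin n) (Fin n) ℝ
  refine hS.preimage (X.adjugate * x.map MvPolynomial.C * X) fun A => ?_
  have hX : (MvPolynomial.eval (matEval A)).mapMatrix X = A :=
    Matrix.mvPolynomialX_mapMatrix_eval A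
  have hx : (MvPolynomial.eval (matEval A)).mapMatrix (x.map MvPolynomial.C) = x := by
    ext i j
    simp
  rw [← RingHom.mapMatrix_apply, map_mul, map_mul, RingHom.map_adjugate, hX, hx]

theorem isClosed {S : Set (Mat n ℝ)} (hS : IsZariskiClosed S) : IsClosed S := by
  have hzeros : S = ⋂ p ∈ matIdeal S, {A | MvPolynomial.eval (matEval A) p = 0} :=
    Set.Subset.antisymm (fun A hA => Set.mem_iInter₂.2 fun p hp => mem_matIdeal.1 hp A hA)
      fun A hA => hS A fun p hp => Set.mem_iInter₂.1 hA p hp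
  rw [hzeros]
  exact isClosed_biInter fun p _ => isClosed_eq (continuous_eval_matEval p) continuous_const

open Polynomial in
theorem finite_setOf_map_eval_mem {S : Set (Mat n ℝ)} (hS : IsZariskiClosed S) (Q : Mat n ℝ[X])
    {t₀ : ℝ} (ht₀ : Q.map (eval t₀) ∉ S) : {t : ℝ | Q.map (eval t) ∈ S}.Finite := by
  obtain ⟨p, hpS, hp⟩ : ∃ p ∈ matIdeal S, MvPolynomial.eval (matEval (Q.map (eval t₀))) p ≠ 0 := by
    by_contra! h
    exact ht₀ (hS _ h)
  let q : ℝ[X] := MvPolynomial.aeval (fun ij => Q ij.1 ij.2) p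
  have hq (t : ℝ) : MvPolynomial.eval (matEval (Q.map (eval t))) p = q.eval t :=
    eval_matEval_map (aeval t) Q p
  have hq₀ : q ≠ 0 := by
    intro h
    simp [hq, h] at hp
  exact (finite_setOfPred_isRoot hq₀).subset fun t ht => (hq t).symm.trans (mem_matIdeal.1 hpS _ ht)

open Polynomial in
theorem map_eval_mem {S : Set (Mat n ℝ)} (hS : IsZariskiClosed S) {Q : Mat n ℝ[X]}
    (hQ : ∀ k : ℕ, Q.map (eval (k : ℝ)) ∈ S) (t : ℝ) : Q.map (eval t) ∈ S := by
  by_contra ht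
  exact Set.infinite_of_injective_forall_mem (s := {t : ℝ | Q.map (eval t) ∈ S})
    Nat.cast_injective hQ (hS.finite_setOf_map_eval_mem Q ht)

end IsZariskiClosed

end ZariskiClosed

section Unipotent

theorem pow_eq_sum_range_choose_smul {R : Type*} [Ring R] {a : R} {n : ℕ}
    (ha : (a - 1) ^ n = 0) (m : ℕ) :
    a ^ m = ∑ k ∈ Finset.range n, m.choose k • (a - 1) ^ k := by
  have hbinom : a ^ m = ∑ k ∈ Finset.range (m + 1), m.choose k • (a - 1) ^ k := by
    conv_lhs => rw [← sub_add_cancel a 1, (Commute.one_right (a - 1)).add_pow]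
    simp only [one_pow, mul_one, nsmul_eq_mul']
  rw [hbinom]
  refine Finset.sum_congr_of_eq_on_inter (fun k _ hk => ?_) (fun k _ hk => ?_) fun _ _ _ => rfl
  · rw [pow_eq_zero_of_le (by simpa using hk) ha, smul_zero]
  · rw [Nat.choose_eq_zero_of_lt (by simpa using hk), zero_smul]

variable {n : ℕ}

theorem isUpperTriangular_of_mem_UTset {A : Mat n ℝ} (hA : A ∈ UTset n) :
    A.IsUpperTriangular :=
  fun i j hij => hA.2 i j hij

theorem det_of_mem_UTset {A : Mat n ℝ} (hA : A ∈ UTset n) : A.det = 1 := by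
  simp [Matrix.det_of_isUpperTriangular (isUpperTriangular_of_mem_UTset hA), hA.1]

theorem inv_eq_adjugate_of_mem_UTset {A : Mat n ℝ} (hA : A ∈ UTset n) : A⁻¹ = A.adjugate := by
  simp [Matrix.inv_def, det_of_mem_UTset hA]

theorem sub_one_pow_eq_zero_of_mem_UTset {A : Mat n ℝ} (hA : A ∈ UTset n) :
    (A - 1) ^ n = 0 := by
  have hchar := A.aeval_self_charpoly
  rw [Matrix.charpoly_of_isUpperTriangular _ (isUpperTriangular_of_mem_UTset hA)] at hchar
  simpa [hA.1] using hchar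

theorem isZariskiClosed_UTset : IsZariskiClosed (UTset n) := by
  intro A hA
  refine ⟨fun i => ?_, fun i j hij => ?_⟩
  · have hvanish : MvPolynomial.X (i, i) - 1 ∈ matIdeal (UTset n) :=
      mem_matIdeal.2 fun B hB => by simp [matEval, hB.1 i]
    simpa [matEval, sub_eq_zero] using hA _ hvanish
  · have hvanish : MvPolynomial.X (i, j) ∈ matIdeal (UTset n) :=
      mem_matIdeal.2 fun B hB => by simp [matEval, hB.2 i j hij]
    simpa [matEval] using hA _ hvanish

open Polynomial in
theorem exists_map_eval_natCast_eq_pow {A : Mat n ℝ} (hA : A ∈ UTset n) :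
    ∃ Q : Mat n ℝ[X], ∀ m : ℕ, Q.map (eval (m : ℝ)) = A ^ m := by
  refine ⟨Matrix.of fun i j => ∑ k ∈ Finset.range n,
    C (((A - 1) ^ k) i j / k.factorial) * descPochhammer ℝ k, fun m => ?_⟩
  rw [pow_eq_sum_range_choose_smul (sub_one_pow_eq_zero_of_mem_UTset hA)]
  ext i j
  simp only [Matrix.map_apply, Matrix.of_apply, eval_finsetSum, eval_mul, eval_C,
    Matrix.sum_apply, Matrix.smul_apply, ← Nat.cast_smul_eq_nsmul ℝ, smul_eq_mul,
    Nat.cast_choose_eq_descPochhammer_div ℝ m]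
  exact Finset.sum_congr rfl fun k _ => by ring

end Unipotent

namespace IsRealUnipotentGroup

variable {n : ℕ} {G : Set (Mat n ℝ)} (hG : IsRealUnipotentGroup n G)
include hG

theorem subset_UTset : G ⊆ UTset n := by
  obtain ⟨⟨S, rfl⟩, -⟩ := hG
  exact fun A hA => hA.1

theorem isZariskiClosed : IsZariskiClosed G := by
  obtain ⟨⟨S, rfl⟩, -⟩ := hG
  exact fun A hA => ⟨isZariskiClosed_UTset A fun p hp => hA p (matIdeal_anti (fun B hB => hB.1) hp),
    fun p hp => hA p (mem_matIdeal.2 fun B hB => hB.2 p hp)⟩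

theorem one_mem : (1 : Mat n ℝ) ∈ G := hG.2.1

theorem mul_mem {a b : Mat n ℝ} (ha : a ∈ G) (hb : b ∈ G) : a * b ∈ G := hG.2.2.1 a ha b hb

theorem inv_mem {a : Mat n ℝ} (ha : a ∈ G) : a⁻¹ ∈ G := hG.2.2.2 a ha

theorem isUnit_det {a : Mat n ℝ} (ha : a ∈ G) : IsUnit a.det :=
  det_of_mem_UTset (hG.subset_UTset ha) ▸ isUnit_one

open Polynomial in
theorem exists_curve {a b : Mat n ℝ} (ha : a ∈ G) (hb : b ∈ G) :
    ∃ Q : Mat n ℝ[X], Q.map (eval 0) = a ∧ Q.map (eval 1) = b ∧ ∀ t, Q.map (eval t) ∈ G := by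
  have hc : a⁻¹ * b ∈ G := hG.mul_mem (hG.inv_mem ha) hb
  obtain ⟨Q, hQ⟩ := exists_map_eval_natCast_eq_pow (hG.subset_UTset hc)
  have hmap (t : ℝ) : (a.map C * Q).map (eval t) = a * Q.map (eval t) := by
    ext i j
    simp [Matrix.mul_apply, eval_finsetSum]
  have hpow (k : ℕ) : (a⁻¹ * b) ^ k ∈ G := by
    induction k with
    | zero => exact hG.one_mem
    | succ k ih => exact pow_succ (a⁻¹ * b) k ▸ hG.mul_mem ih hc
  refine ⟨a.map C * Q, ?_, ?_, hG.isZariskiClosed.map_eval_mem fun k => ?_⟩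
  · have hQ₀ : Q.map (eval 0) = 1 := by simpa using hQ 0
    rw [hmap, hQ₀, mul_one]
  · have hQ₁ : Q.map (eval 1) = a⁻¹ * b := by simpa using hQ 1
    rw [hmap, hQ₁, Matrix.mul_nonsing_inv_cancel_left _ _ (hG.isUnit_det ha)]
  · rw [hmap, hQ]
    exact hG.mul_mem ha (hpow k)

open Polynomial in
theorem eval_eq_of_bounded {p : MvPolynomial (Fin n × Fin n) ℝ} {B : ℝ}
    (hB : ∀ a ∈ G, |MvPolynomial.eval (matEval a) p| ≤ B) {a b : Mat n ℝ} (ha : a ∈ G)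
    (hb : b ∈ G) : MvPolynomial.eval (matEval a) p = MvPolynomial.eval (matEval b) p := by
  obtain ⟨Q, rfl, rfl, hQ⟩ := hG.exists_curve ha hb
  let q : ℝ[X] := MvPolynomial.aeval (fun ij => Q ij.1 ij.2) p
  have hq (t : ℝ) : MvPolynomial.eval (matEval (Q.map (eval t))) p = q.eval t :=
    eval_matEval_map (aeval t) Q p
  have hdeg : q.degree ≤ 0 := q.isBoundedUnder_abs_atTop_iff.1
    ⟨B, eventually_map.2 <| .of_forall fun t => hq t ▸ hB _ (hQ t)⟩
  rw [hq, hq, eq_C_of_degree_le_zero hdeg, eval_C, eval_C]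

end IsRealUnipotentGroup

theorem IsZariskiClosed.isRealUnipotentGroup {n : ℕ} {H : Set (Mat n ℝ)} (hH : IsZariskiClosed H)
    (hHU : H ⊆ UTset n) (h1 : 1 ∈ H) (hmul : ∀ a ∈ H, ∀ b ∈ H, a * b ∈ H)
    (hinv : ∀ a ∈ H, a⁻¹ ∈ H) : IsRealUnipotentGroup n H :=
  ⟨⟨matIdeal H, Set.Subset.antisymm (fun A hA => ⟨hHU hA, fun _ hp => mem_matIdeal.1 hp A hA⟩)
    fun A hA => hH A hA.2⟩, h1, hmul, hinv⟩

section DifferenceFiltration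

variable {R A : Type*} [CommRing R] [CommRing A] [Algebra R A] (T : Set (A →ₐ[R] A))

/-- The elements annihilated by any `k` successive difference operators `τ - 1` with `τ ∈ T`; the
index `k` serves as a degree in inductions over a locally nilpotent action. -/
def differenceFiltration : ℕ → Submodule R A
  | 0 => ⊥
  | k + 1 => ⨅ τ ∈ T, (differenceFiltration k).comap (τ.toLinearMap - LinearMap.id)

variable {T}

theorem mem_differenceFiltration_succ {k : ℕ} {a : A} :
    a ∈ differenceFiltration T (k + 1) ↔ ∀ τ ∈ T, τ a - a ∈ differenceFiltration T k := by
  simp [differenceFiltration]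

theorem differenceFiltration_mono : Monotone (differenceFiltration T) := by
  refine monotone_nat_of_le_succ fun k => ?_
  induction k with
  | zero => exact bot_le
  | succ k ih =>
    exact fun a ha => mem_differenceFiltration_succ.2 fun τ hτ =>
      ih (mem_differenceFiltration_succ.1 ha τ hτ)

theorem algebraMap_mem_differenceFiltration_one (r : R) :
    algebraMap R A r ∈ differenceFiltration T 1 :=
  mem_differenceFiltration_succ.2 fun τ _ => by simp

theorem mul_mem_differenceFiltration {k l : ℕ} {a b : A} (ha : a ∈ differenceFiltration T k)
    (hb : b ∈ differenceFiltration T l) : a * b ∈ differenceFiltration T (k + l) := by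
  induction k generalizing a b l with
  | zero => simp [(Submodule.mem_bot R).1 ha]
  | succ k ihk =>
    induction l generalizing a b with
    | zero => simp [(Submodule.mem_bot R).1 hb]
    | succ l ihl =>
      refine (mem_differenceFiltration_succ (k := k + 1 + l)).2 fun τ hτ => ?_
      have hda := mem_differenceFiltration_succ.1 ha τ hτ
      have hdb := mem_differenceFiltration_succ.1 hb τ hτ
      have hτb : τ b ∈ differenceFiltration T (l + 1) := by
        simpa using add_mem (differenceFiltration_mono l.le_succ hdb) hb
      have hleibniz : τ (a * b) - a * b = (τ a - a) * τ b + a * (τ b - b) := by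
        rw [map_mul]
        ring
      rw [hleibniz]
      exact add_mem (Nat.succ_add_eq_add_succ k l ▸ ihk hda hτb) (ihl ha hdb)

theorem exists_mem_differenceFiltration {σ : Type*}
    {T : Set (MvPolynomial σ R →ₐ[R] MvPolynomial σ R)}
    (hX : ∀ i, ∃ k, MvPolynomial.X i ∈ differenceFiltration T k) (p : MvPolynomial σ R) :
    ∃ k, p ∈ differenceFiltration T k := by
  induction p using MvPolynomial.induction_on with
  | C r => exact ⟨1, algebraMap_mem_differenceFiltration_one r⟩
  | add p q hp hq =>
    obtain ⟨k, hp⟩ := hp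
    obtain ⟨l, hq⟩ := hq
    exact ⟨max k l, add_mem (differenceFiltration_mono (le_max_left k l) hp)
      (differenceFiltration_mono (le_max_right k l) hq)⟩
  | mul_X p i hp =>
    obtain ⟨k, hp⟩ := hp
    obtain ⟨l, hi⟩ := hX i
    exact ⟨k + l, mul_mem_differenceFiltration hp hi⟩

end DifferenceFiltration

section RightTranslation

variable {n : ℕ}

/-- The action `p(X) ↦ p(Xγ)` of a matrix `γ` on polynomials in the matrix entries. -/
def rightTranslate (γ : Mat n ℝ) :
    MvPolynomial (Fin n × Fin n) ℝ →ₐ[ℝ] MvPolynomial (Fin n × Fin n) ℝ :=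
  MvPolynomial.aeval fun ij => ∑ k, MvPolynomial.X (ij.1, k) * MvPolynomial.C (γ k ij.2)

theorem eval_rightTranslate (A γ : Mat n ℝ) (p : MvPolynomial (Fin n × Fin n) ℝ) :
    MvPolynomial.eval (matEval A) (rightTranslate γ p) =
      MvPolynomial.eval (matEval (A * γ)) p := by
  have hmap : (Matrix.of fun i j => ∑ k, MvPolynomial.X (i, k) * MvPolynomial.C (γ k j)).map
      (MvPolynomial.aeval (matEval A)) = A * γ := by
    ext i j
    simp [Matrix.mul_apply, matEval]
  rw [← hmap, eval_matEval_map]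
  rfl

theorem rightTranslate_X_sub_X {γ : Mat n ℝ} (hγ : γ ∈ UTset n) (i j : Fin n) :
    rightTranslate γ (MvPolynomial.X (i, j)) - MvPolynomial.X (i, j) =
      ∑ k with k < j, γ k j • MvPolynomial.X (i, k) := by
  have hsplit : ∑ k, MvPolynomial.X (i, k) * MvPolynomial.C (γ k j) =
      ∑ k, ((if k < j then γ k j • MvPolynomial.X (i, k) else 0) +
        if k = j then (MvPolynomial.X (i, k) : MvPolynomial (Fin n × Fin n) ℝ) else 0) := by
    refine Finset.sum_congr rfl fun k _ => ?_
    rw [mul_comm, ← MvPolynomial.smul_eq_C_mul]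
    rcases lt_trichotomy k j with h | rfl | h
    · simp [h, h.ne]
    · simp [hγ.1]
    · simp [h.not_gt, h.ne', hγ.2 k j h]
  rw [rightTranslate, MvPolynomial.aeval_X, hsplit, Finset.sum_add_distrib, ← Finset.sum_filter,
    Finset.sum_ite_eq' Finset.univ j, if_pos (Finset.mem_univ j), add_sub_cancel_right]

theorem X_mem_differenceFiltration (i j : Fin n) :
    MvPolynomial.X (i, j) ∈ differenceFiltration (rightTranslate '' UTset n) (j + 1) := by
  induction j using WellFoundedLT.induction with
  | _ j ih =>
  refine mem_differenceFiltration_succ.2 ?_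
  rintro _ ⟨γ, hγ, rfl⟩
  rw [rightTranslate_X_sub_X hγ]
  exact sum_mem fun k hk => Submodule.smul_mem _ _
    (differenceFiltration_mono (Finset.mem_filter.1 hk).2 (ih k (Finset.mem_filter.1 hk).2))

end RightTranslation

namespace IsLatticeIn

variable {n : ℕ} {L Δ : Set (Mat n ℝ)}

theorem countable (hΔ : IsLatticeIn n L Δ) : Δ.Countable := by
  obtain ⟨-, -, -, -, hdiscrete, -⟩ := hΔ
  have : SecondCountableTopology (Mat n ℝ) :=
    inferInstanceAs (SecondCountableTopology (Fin n → Fin n → ℝ))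
  exact countable_of_Lindelof_of_discrete (X := Δ)

theorem exists_bound_of_forall_mul_eq (hΔ : IsLatticeIn n L Δ) {f : Mat n ℝ → ℝ}
    (hf : Continuous f) (hinv : ∀ γ ∈ Δ, ∀ a ∈ L, f (a * γ) = f a) :
    ∃ B, ∀ a ∈ L, |f a| ≤ B := by
  obtain ⟨-, -, -, -, -, K, hKL, hK, hcover⟩ := hΔ
  obtain ⟨B, hB⟩ := hK.exists_bound_of_continuousOn hf.continuousOn
  refine ⟨B, fun a ha => ?_⟩
  obtain ⟨k, hk, γ, hγ, rfl⟩ := hcover a ha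
  exact hinv γ hγ k (hKL hk) ▸ hB k hk

theorem mem_matIdeal_of_mem_differenceFiltration (hL : IsRealUnipotentGroup n L)
    (hΔ : IsLatticeIn n L Δ) {k : ℕ} {p : MvPolynomial (Fin n × Fin n) ℝ}
    (hpk : p ∈ differenceFiltration (rightTranslate '' UTset n) k) (hp : p ∈ matIdeal Δ) :
    p ∈ matIdeal L := by
  induction k generalizing p with
  | zero => exact (Submodule.mem_bot ℝ).1 hpk ▸ zero_mem _
  | succ k ih =>
    obtain ⟨hΔL, hone, hmul, -⟩ := id hΔ
    have hdiff : ∀ γ ∈ Δ, rightTranslate γ p - p ∈ matIdeal L := by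
      refine fun γ hγ => ih (mem_differenceFiltration_succ.1 hpk _
        ⟨γ, hL.subset_UTset (hΔL hγ), rfl⟩) (mem_matIdeal.2 fun δ hδ => ?_)
      rw [map_sub, eval_rightTranslate, mem_matIdeal.1 hp _ (hmul δ hδ γ hγ),
        mem_matIdeal.1 hp δ hδ, sub_zero]
    have hinv : ∀ γ ∈ Δ, ∀ a ∈ L,
        MvPolynomial.eval (matEval (a * γ)) p = MvPolynomial.eval (matEval a) p := by
      intro γ hγ a ha
      rw [← sub_eq_zero, ← eval_rightTranslate, ← map_sub]
      exact mem_matIdeal.1 (hdiff γ hγ) a ha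
    obtain ⟨B, hB⟩ := hΔ.exists_bound_of_forall_mul_eq (continuous_eval_matEval p) hinv
    exact mem_matIdeal.2 fun a ha =>
      (hL.eval_eq_of_bounded hB ha hL.one_mem).trans (mem_matIdeal.1 hp 1 hone)

theorem matIdeal_eq (hL : IsRealUnipotentGroup n L) (hΔ : IsLatticeIn n L Δ) :
    matIdeal Δ = matIdeal L := by
  refine le_antisymm (fun p hp => ?_) (matIdeal_anti hΔ.1)
  obtain ⟨k, hpk⟩ : ∃ k, p ∈ differenceFiltration (rightTranslate '' UTset n) k :=
    exists_mem_differenceFiltration (fun (i, j) => ⟨j + 1, X_mem_differenceFiltration i j⟩) p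
  exact mem_matIdeal_of_mem_differenceFiltration hL hΔ hpk hp

end IsLatticeIn

theorem countable_setOf_isRationalFor {n : ℕ} {G Γ : Set (Mat n ℝ)} (hΓ : Γ.Countable) :
    {L | IsRealAlgSubgroup n G L ∧ IsRationalFor n Γ L}.Countable := by
  refine Set.MapsTo.countable_of_injOn (f := matIdeal) ?_ ?_
    (countable_image_vanishingIdeal_powerset (K := ℝ) (hΓ.image matEval))
  · rintro L ⟨hL, hΓL⟩
    rw [← hΓL.matIdeal_eq hL.2]
    exact ⟨_, Set.image_mono Set.inter_subset_left, rfl⟩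
  · rintro L ⟨hL, -⟩ M ⟨hM, -⟩ h
    exact (hM.2.isZariskiClosed.subset_of_matIdeal_le h.ge).antisymm
      (hL.2.isZariskiClosed.subset_of_matIdeal_le h.le)

section NormalClosure

variable {n : ℕ} {G L P : Set (Mat n ℝ)}

/-- The algebraic normal closure of `P` in `G`, as the intersection of all normal real algebraic
subgroups of `G` containing `P`. -/
def algNormalClosure (n : ℕ) (G P : Set (Mat n ℝ)) : Set (Mat n ℝ) :=
  ⋂₀ {M | IsRealAlgSubgroup n G M ∧ IsNormalIn n G M ∧ P ⊆ M}

/-- The normal core of `L` in `G`: the part of `G` lying in all conjugates `gLg⁻¹` with `g ∈ G`. It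
contains `P` exactly when `L` contains all conjugates of `P`. -/
def normalCore (G L : Set (Mat n ℝ)) : Set (Mat n ℝ) :=
  {x | x ∈ G ∧ ∀ g ∈ G, g⁻¹ * x * g ∈ L}

theorem isZariskiClosed_normalCore (hG : IsZariskiClosed G) (hL : IsZariskiClosed L) :
    IsZariskiClosed (normalCore G L) := by
  have hinter : normalCore G L = G ∩ ⋂ g : G, (fun x => g.1⁻¹ * x * g.1) ⁻¹' L := by
    ext x
    simp [normalCore]
  exact hinter ▸ hG.inter (.iInter fun g => hL.preimage_mul_mul _ _)

theorem isRealAlgSubgroup_normalCore (hG : IsRealUnipotentGroup n G)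
    (hL : IsRealUnipotentGroup n L) : IsRealAlgSubgroup n G (normalCore G L) := by
  refine ⟨fun x hx => hx.1, IsZariskiClosed.isRealUnipotentGroup
    (isZariskiClosed_normalCore hG.isZariskiClosed hL.isZariskiClosed)
    (fun x hx => hG.subset_UTset hx.1) ⟨hG.one_mem, fun g hg => ?_⟩ ?_ ?_⟩
  · rw [mul_one, Matrix.nonsing_inv_mul _ (hG.isUnit_det hg)]
    exact hL.one_mem
  · rintro a ⟨ha, haL⟩ b ⟨hb, hbL⟩
    refine ⟨hG.mul_mem ha hb, fun g hg => ?_⟩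
    have hconj : g⁻¹ * a * g * (g⁻¹ * b * g) = g⁻¹ * (a * b) * g := by
      simp only [mul_assoc, Matrix.mul_nonsing_inv_cancel_left _ _ (hG.isUnit_det hg)]
    exact hconj ▸ hL.mul_mem (haL g hg) (hbL g hg)
  · rintro a ⟨ha, haL⟩
    refine ⟨hG.inv_mem ha, fun g hg => ?_⟩
    have hconj : (g⁻¹ * a * g)⁻¹ = g⁻¹ * a⁻¹ * g := by
      rw [Matrix.mul_inv_rev, Matrix.mul_inv_rev,
        Matrix.nonsing_inv_nonsing_inv _ (hG.isUnit_det hg), mul_assoc]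
    exact hconj ▸ hL.inv_mem (haL g hg)

theorem isNormalIn_normalCore (hG : IsRealUnipotentGroup n G) (L : Set (Mat n ℝ)) :
    IsNormalIn n G (normalCore G L) := by
  rintro h hh x ⟨hx, hxL⟩
  refine ⟨hG.mul_mem (hG.mul_mem hh hx) (hG.inv_mem hh), fun g hg => ?_⟩
  have hconj : (h⁻¹ * g)⁻¹ * x * (h⁻¹ * g) = g⁻¹ * (h * x * h⁻¹) * g := by
    rw [Matrix.mul_inv_rev, Matrix.nonsing_inv_nonsing_inv _ (hG.isUnit_det hh)]
    simp only [mul_assoc]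
  exact hconj ▸ hxL _ (hG.mul_mem (hG.inv_mem hh) hg)

theorem algNormalClosure_subset (hG : IsRealUnipotentGroup n G) (hL : IsRealUnipotentGroup n L)
    (hPG : P ⊆ G) (hPL : ∀ g ∈ G, ∀ x ∈ P, g⁻¹ * x * g ∈ L) : algNormalClosure n G P ⊆ L := by
  intro x hx
  have hcore : x ∈ normalCore G L :=
    hx _ ⟨isRealAlgSubgroup_normalCore hG hL, isNormalIn_normalCore hG L,
      fun y hy => ⟨hPG hy, fun g hg => hPL g hg y hy⟩⟩
  simpa using hcore.2 1 hG.one_mem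

end NormalClosure

section Genericity

variable {n : ℕ} {G L P Z : Set (Mat n ℝ)}

theorem IsZariskiClosed.baireSpace (hG : IsZariskiClosed G) : BaireSpace G := by
  have : LocallyCompactSpace (Mat n ℝ) :=
    inferInstanceAs (LocallyCompactSpace (Fin n → Fin n → ℝ))
  have : LocallyCompactSpace G := hG.isClosed.locallyCompactSpace
  infer_instance

open Polynomial in
theorem IsRealUnipotentGroup.dense_setOf_notMem (hG : IsRealUnipotentGroup n G)
    (hZ : IsZariskiClosed Z) (hGZ : ¬G ⊆ Z) : Dense {g : G | (g : Mat n ℝ) ∉ Z} := by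
  rintro ⟨a, ha⟩
  obtain ⟨b, hb, hbZ⟩ := Set.not_subset.1 hGZ
  obtain ⟨Q, rfl, rfl, hQ⟩ := hG.exists_curve ha hb
  let curve (t : ℝ) : G := ⟨Q.map (eval t), hQ t⟩
  have hcurve : Continuous curve :=
    (continuous_matrix fun i j => (Q i j).continuous).subtype_mk _
  have hdense : Dense {t : ℝ | Q.map (eval t) ∉ Z} :=
    (hZ.finite_setOf_map_eval_mem Q hbZ).countable.dense_compl ℝ
  refine closure_mono ?_ (image_closure_subset_closure_image hcurve ⟨0, hdense 0, rfl⟩)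
  rintro _ ⟨t, ht, rfl⟩
  exact ht

theorem IsRealUnipotentGroup.eventually_residual_notMem (hG : IsRealUnipotentGroup n G)
    (hZ : IsZariskiClosed Z) (hGZ : ¬G ⊆ Z) : ∀ᶠ g : G in residual G, (g : Mat n ℝ) ∉ Z :=
  residual_of_dense_open (hZ.isClosed.isOpen_compl.preimage continuous_subtype_val)
    (hG.dense_setOf_notMem hZ hGZ)

theorem isZariskiClosed_setOf_adjugate_mul_mul_mem (hL : IsZariskiClosed L)
    (P : Set (Mat n ℝ)) : IsZariskiClosed {A : Mat n ℝ | ∀ x ∈ P, A.adjugate * x * A ∈ L} := by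
  have hinter : {A : Mat n ℝ | ∀ x ∈ P, A.adjugate * x * A ∈ L} =
      ⋂ x : P, (fun A : Mat n ℝ => A.adjugate * x * A) ⁻¹' L := by
    ext A
    simp
  exact hinter ▸ .iInter fun x => hL.preimage_adjugate_mul_mul x

theorem eventually_residual_algNormalClosure_subset (hG : IsRealUnipotentGroup n G)
    (hL : IsRealUnipotentGroup n L) (hPG : P ⊆ G) :
    ∀ᶠ g : G in residual G,
      (∀ x ∈ P, (g : Mat n ℝ)⁻¹ * x * g ∈ L) → algNormalClosure n G P ⊆ L := by
  by_cases hcl : algNormalClosure n G P ⊆ L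
  · exact .of_forall fun _ _ => hcl
  let Z : Set (Mat n ℝ) := {A | ∀ x ∈ P, A.adjugate * x * A ∈ L}
  have hmem : ∀ g ∈ G, g ∈ Z ↔ ∀ x ∈ P, g⁻¹ * x * g ∈ L := fun g hg => by
    rw [inv_eq_adjugate_of_mem_UTset (hG.subset_UTset hg)]
    rfl
  have hGZ : ¬G ⊆ Z := fun h =>
    hcl (algNormalClosure_subset hG hL hPG fun g hg => (hmem g hg).1 (h hg))
  filter_upwards [hG.eventually_residual_notMem
    (isZariskiClosed_setOf_adjugate_mul_mul_mem hL.isZariskiClosed P) hGZ] with g hgZ hg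
  exact absurd ((hmem g g.2).2 hg) hgZ

end Genericity

theorem stmt15_general {n : ℕ} {G P Γ : Set (Mat n ℝ)} (hG : IsRealUnipotentGroup n G)
    (hP : P ⊆ G) (hΓ : Γ.Countable) :
    ∀ g ∈ G, g ∈ closure {g' | g' ∈ G ∧
      ∀ L : Set (Mat n ℝ), IsRealAlgSubgroup n G L → IsRationalFor n Γ L →
        (∀ x ∈ P, g'⁻¹ * x * g' ∈ L) → algNormalClosure n G P ⊆ L} := by
  intro g hg
  have : BaireSpace G := hG.isZariskiClosed.baireSpace
  have hgeneric : ∀ᶠ g' : G in residual G,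
      ∀ L ∈ {L | IsRealAlgSubgroup n G L ∧ IsRationalFor n Γ L},
        (∀ x ∈ P, (g' : Mat n ℝ)⁻¹ * x * g' ∈ L) → algNormalClosure n G P ⊆ L :=
    (eventually_countable_ball (countable_setOf_isRationalFor hΓ)).2 fun L hL =>
      eventually_residual_algNormalClosure_subset hG hL.1.2 hP
  refine closure_mono ?_ (image_closure_subset_closure_image continuous_subtype_val
    ⟨⟨g, hg⟩, dense_of_mem_residual hgeneric ⟨g, hg⟩, rfl⟩)
  rintro _ ⟨g', hg', rfl⟩
  exact ⟨g'.2, fun L hL hΓL => hg' L ⟨hL, hΓL⟩⟩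

/-- the set of `g ∈ G` such that every `Γ`-rational real algebraic
subgroup containing `g⁻¹Pg` contains the algebraic normal closure `N` of `P` is dense
in `G`. -/
theorem stmt15 {n : ℕ} (G P N Γ : Set (Mat n ℝ)) (hG : IsRealUnipotentGroup n G)
    (hP : IsRealAlgSubgroup n G P)
    (hN : IsRealAlgSubgroup n G N) (hNnormal : IsNormalIn n G N) (hPN : P ⊆ N)
    (hNmin : ∀ M : Set (Mat n ℝ), IsRealAlgSubgroup n G M → IsNormalIn n G M → P ⊆ M →
      N ⊆ M)
    (hΓ : IsLatticeIn n G Γ) :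
    ∀ g ∈ G, g ∈ closure {g' | g' ∈ G ∧
      ∀ L : Set (Mat n ℝ), IsRealAlgSubgroup n G L → IsRationalFor n Γ L →
        (∀ x ∈ P, g'⁻¹ * x * g' ∈ L) → N ⊆ L} := by
  obtain rfl : N = algNormalClosure n G P :=
    (Set.subset_sInter fun M hM => hNmin M hM.1 hM.2.1 hM.2.2).antisymm
      (Set.sInter_subset_of_mem ⟨hN, hNnormal, hPN⟩)
  exact stmt15_general hG hP.1 hΓ.countable
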